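/- For any Borel probability measures μ and ν on X and any p ≥ 1 and k > 0, RPW_{p,k}(μ, ν) ≤ (1/k)·W_p(μ, ν) ≤ RPW_{p,k}(μ, ν) + k^{−(p+1)/p}. -/

import Mathlib

open MeasureTheory

noncomputable section

/-- `γ` is an `α`-partial transport plan from `μ` to `ν`: a Borel measure on `X × X` of
total mass `α` whose first marginal is dominated by `μ` and second marginal by `ν`. -/
def IsPartialPlan {X : Type*} [MeasurableSpace X] (μ ν : Measure X) (α : ℝ)
    (γ : Measure (X × X)) : Prop :=
  γ Set.univ = ENNReal.ofReal α ∧ γ.map Prod.fst ≤ μ ∧ γ.map Prod.snd ≤ ν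

/-- The cost `w_p(γ) = (∫ c(x,y)^p dγ)^(1/p)` of a transport plan. -/
def planCost {X : Type*} [MetricSpace X] [MeasurableSpace X] (p : ℝ)
    (γ : Measure (X × X)) : ℝ :=
  (∫ z, dist z.1 z.2 ^ p ∂γ) ^ (1 / p)

/-- The `α`-partial `p`-Wasserstein distance `W_{p,α}(μ, ν)`. -/
def partialW {X : Type*} [MetricSpace X] [MeasurableSpace X] (p α : ℝ)
    (μ ν : Measure X) : ℝ :=
  sInf { c : ℝ | ∃ γ : Measure (X × X), IsPartialPlan μ ν α γ ∧ c = planCost p γ }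

/-- The `(p,k)`-RPW distance: the least `ε ∈ [0,1]` with `W_{p,1-ε}(μ,ν) ≤ kε`. -/
def RPW {X : Type*} [MetricSpace X] [MeasurableSpace X] (p k : ℝ)
    (μ ν : Measure X) : ℝ :=
  sInf { ε : ℝ | ε ∈ Set.Icc (0:ℝ) 1 ∧ partialW p (1 - ε) μ ν ≤ k * ε }

lemma aux_integrable {X : Type*} [MetricSpace X] [CompactSpace X] [MeasurableSpace X]
    [BorelSpace X] (hdiam : ∀ a b : X, dist a b ≤ 1) (p : ℝ) (hp : 1 ≤ p)
    (γ : Measure (X × X)) [IsFiniteMeasure γ] :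
    Integrable (fun z : X × X => dist z.1 z.2 ^ p) γ := by
  haveI : SecondCountableTopology X := EMetric.secondCountable_of_sigmaCompact X
  refine Integrable.of_bound (C := 1) ?_ ?_
  · exact ((continuous_dist (α := X)).rpow_const
      (fun _ => Or.inr (by linarith))).aestronglyMeasurable
  · refine Filter.Eventually.of_forall fun z => ?_
    rw [Real.norm_of_nonneg (by positivity)]
    exact Real.rpow_le_one dist_nonneg (hdiam _ _) (by linarith)

lemma aux_nonneg {X : Type*} [MetricSpace X] [MeasurableSpace X] (p : ℝ)
    (γ : Measure (X × X)) : 0 ≤ ∫ z, dist z.1 z.2 ^ p ∂γ :=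
  integral_nonneg fun z => by positivity

lemma aux_cost_nonneg {X : Type*} [MetricSpace X] [MeasurableSpace X] (p : ℝ)
    (γ : Measure (X × X)) : 0 ≤ planCost p γ :=
  Real.rpow_nonneg (aux_nonneg p γ) _

lemma aux_le_mass {X : Type*} [MetricSpace X] [CompactSpace X] [MeasurableSpace X]
    [BorelSpace X] (hdiam : ∀ a b : X, dist a b ≤ 1) (p : ℝ) (hp : 1 ≤ p)
    (γ : Measure (X × X)) [IsFiniteMeasure γ] :
    ∫ z, dist z.1 z.2 ^ p ∂γ ≤ γ.real Set.univ := by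
  calc ∫ z, dist z.1 z.2 ^ p ∂γ ≤ ∫ z, (1 : ℝ) ∂γ :=
        integral_mono (aux_integrable hdiam p hp γ) (integrable_const _)
          fun z => Real.rpow_le_one dist_nonneg (hdiam _ _) (by linarith)
    _ = γ.real Set.univ := by simp

lemma partialW_le {X : Type*} [MetricSpace X] [MeasurableSpace X] {p α : ℝ}
    {μ ν : Measure X} {γ : Measure (X × X)} (h : IsPartialPlan μ ν α γ) :
    partialW p α μ ν ≤ planCost p γ :=
  csInf_le ⟨0, by rintro c ⟨γ, -, rfl⟩; exact aux_cost_nonneg p γ⟩ ⟨γ, h, rfl⟩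

lemma plan_smul {X : Type*} [MeasurableSpace X] {μ ν : Measure X} {α : ℝ}
    {γ : Measure (X × X)} (hα : α ∈ Set.Icc (0 : ℝ) 1) (h : IsPartialPlan μ ν 1 γ) :
    IsPartialPlan μ ν α (ENNReal.ofReal α • γ) := by
  have h1 : ENNReal.ofReal α ≤ 1 := by simpa using hα.2
  obtain ⟨ha, hb, hc⟩ := h
  refine ⟨by simp [ha], ?_, ?_⟩
  · rw [Measure.map_smul]
    refine le_trans (fun s => ?_) hb
    simpa using mul_le_of_le_one_left' h1
  · rw [Measure.map_smul]
    refine le_trans (fun s => ?_) hc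
    simpa using mul_le_of_le_one_left' h1

lemma plan_prod {X : Type*} [MeasurableSpace X] (μ ν : Measure X) [IsProbabilityMeasure μ]
    [IsProbabilityMeasure ν] : IsPartialPlan μ ν 1 (μ.prod ν) := by
  refine ⟨by simp, ?_, ?_⟩
  · rw [Measure.map_fst_prod]; simp
  · rw [Measure.map_snd_prod]; simp

lemma partialW_mono {X : Type*} [MetricSpace X] [MeasurableSpace X] {p α : ℝ} (hp : 1 ≤ p)
    (μ ν : Measure X) [IsProbabilityMeasure μ] [IsProbabilityMeasure ν]
    (hα : α ∈ Set.Icc (0 : ℝ) 1) : partialW p α μ ν ≤ partialW p 1 μ ν := by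
  refine le_csInf ⟨_, _, plan_prod μ ν, rfl⟩ ?_
  rintro c ⟨γ, h, rfl⟩
  refine (partialW_le (plan_smul hα h)).trans ?_
  unfold planCost
  rw [integral_smul_measure, ENNReal.toReal_ofReal hα.1, smul_eq_mul]
  have := aux_nonneg p γ
  exact Real.rpow_le_rpow (mul_nonneg hα.1 this) (mul_le_of_le_one_left this hα.2)
    (by positivity)

lemma partialW_completion {X : Type*} [MetricSpace X] [CompactSpace X] [MeasurableSpace X]
    [BorelSpace X] (hdiam : ∀ a b : X, dist a b ≤ 1)
    (μ ν : Measure X) [IsProbabilityMeasure μ] [IsProbabilityMeasure ν]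
    (p ε : ℝ) (hp : 1 ≤ p) (hε : ε ∈ Set.Icc (0 : ℝ) 1) (γ : Measure (X × X))
    (h : IsPartialPlan μ ν (1 - ε) γ) :
    partialW p 1 μ ν ≤ planCost p γ + ε ^ (1 / p) := by
  obtain ⟨ha, hb, hc⟩ := h
  haveI : IsFiniteMeasure γ := ⟨by rw [ha]; exact ENNReal.ofReal_lt_top⟩
  have hsub : (1 : ENNReal) - ENNReal.ofReal (1 - ε) = ENNReal.ofReal ε := by
    rw [← ENNReal.ofReal_one, ← ENNReal.ofReal_sub _ (by linarith [hε.2])]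
    congr 1; ring
  set μ' := μ - γ.map Prod.fst with hμ'
  set ν' := ν - γ.map Prod.snd with hν'
  have hm : μ' Set.univ = ENNReal.ofReal ε := by
    rw [hμ', Measure.sub_apply MeasurableSet.univ hb, Measure.map_apply measurable_fst .univ]
    simp [ha, hsub]
  have hn : ν' Set.univ = ENNReal.ofReal ε := by
    rw [hν', Measure.sub_apply MeasurableSet.univ hc, Measure.map_apply measurable_snd .univ]
    simp [ha, hsub]
  have hadd : μ' + γ.map Prod.fst = μ := Measure.sub_add_cancel_of_le hb
  have hadd2 : ν' + γ.map Prod.snd = ν := Measure.sub_add_cancel_of_le hc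
  have hle1 : ENNReal.ofReal ε⁻¹ * ENNReal.ofReal ε ≤ 1 := by
    rw [← ENNReal.ofReal_mul (inv_nonneg.2 hε.1)]
    simpa using inv_mul_le_one
  have hmass : ENNReal.ofReal ε⁻¹ * (ENNReal.ofReal ε * ENNReal.ofReal ε)
      = ENNReal.ofReal ε := by
    rw [← ENNReal.ofReal_mul hε.1, ← ENNReal.ofReal_mul (inv_nonneg.2 hε.1)]
    congr 1
    rcases eq_or_ne ε 0 with h0 | h0
    · simp [h0]
    · field_simp
  set π := ENNReal.ofReal ε⁻¹ • μ'.prod ν' with hπ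
  have hπu : π Set.univ = ENNReal.ofReal ε := by
    rw [hπ, Measure.smul_apply, ← Set.univ_prod_univ, Measure.prod_prod, hm, hn, smul_eq_mul,
      hmass]
  haveI : IsFiniteMeasure π := ⟨by rw [hπu]; exact ENNReal.ofReal_lt_top⟩
  have hplan : IsPartialPlan μ ν 1 (γ + π) := by
    refine ⟨?_, ?_, ?_⟩
    · rw [Measure.add_apply, ha, hπu, ← ENNReal.ofReal_add (by linarith [hε.2]) hε.1]
      simp
    · rw [Measure.map_add _ _ measurable_fst, add_comm]
      conv_rhs => rw [← hadd]
      refine add_le_add_left ?_ _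
      rw [hπ, Measure.map_smul, Measure.map_fst_prod, hn, smul_smul]
      intro s
      simpa using mul_le_of_le_one_left' hle1
    · rw [Measure.map_add _ _ measurable_snd, add_comm]
      conv_rhs => rw [← hadd2]
      refine add_le_add_left ?_ _
      rw [hπ, Measure.map_smul, Measure.map_snd_prod, hm, smul_smul]
      intro s
      simpa using mul_le_of_le_one_left' hle1
  refine (partialW_le hplan).trans ?_
  unfold planCost
  rw [integral_add_measure (aux_integrable hdiam p hp γ) (aux_integrable hdiam p hp π)]
  have h1 := aux_nonneg p γ
  have h2 := aux_nonneg p π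
  have h3 : ∫ z, dist z.1 z.2 ^ p ∂π ≤ ε := by
    refine (aux_le_mass hdiam p hp π).trans ?_
    rw [Measure.real, hπu, ENNReal.toReal_ofReal hε.1]
  have hp1 : 1 / p ≤ 1 := by rw [div_le_one (by linarith)]; exact hp
  refine (Real.rpow_add_le_add_rpow h1 h2 (by positivity) hp1).trans ?_
  gcongr

theorem rpw_wasserstein_sandwich
    {X : Type*} [MetricSpace X] [CompactSpace X] [MeasurableSpace X] [BorelSpace X]
    (hdiam : ∀ a b : X, dist a b ≤ 1)
    (μ ν : Measure X) [IsProbabilityMeasure μ] [IsProbabilityMeasure ν]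
    (p k : ℝ) (hp : 1 ≤ p) (hk : 0 < k) :
    RPW p k μ ν ≤ (1 / k) * partialW p 1 μ ν ∧
    (1 / k) * partialW p 1 μ ν ≤ RPW p k μ ν + k ^ (-((p + 1) / p)) := by
  have hp0 : 0 < p := by linarith
  have hW0 : 0 ≤ partialW p 1 μ ν :=
    Real.sInf_nonneg (by rintro c ⟨γ, -, rfl⟩; exact aux_cost_nonneg p γ)
  have hbdd : BddBelow { ε : ℝ | ε ∈ Set.Icc (0:ℝ) 1 ∧ partialW p (1 - ε) μ ν ≤ k * ε } :=
    ⟨0, fun ε h => h.1.1⟩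
  have hone : (1 : ℝ) ∈ { ε : ℝ | ε ∈ Set.Icc (0:ℝ) 1 ∧ partialW p (1 - ε) μ ν ≤ k * ε } := by
    refine ⟨by simp, ?_⟩
    have h0 : IsPartialPlan μ ν (1 - 1) (0 : Measure (X × X)) := by
      refine ⟨by simp, ?_, ?_⟩ <;> simp [Measure.zero_le]
    refine (partialW_le h0).trans ?_
    simp only [planCost, integral_zero_measure]
    rw [Real.zero_rpow (by positivity)]
    linarith
  constructor
  · by_cases h : (1 / k) * partialW p 1 μ ν ≤ 1
    · have h0 : 0 ≤ (1 / k) * partialW p 1 μ ν := by positivity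
      refine csInf_le hbdd ⟨⟨h0, h⟩, ?_⟩
      refine (partialW_mono hp μ ν ⟨by linarith, by linarith⟩).trans (le_of_eq ?_)
      field_simp
    · exact (csInf_le hbdd hone).trans (not_le.1 h).le
  · rw [← sub_le_iff_le_add]
    refine le_csInf ⟨1, hone⟩ ?_
    rintro ε ⟨hε, hWε⟩
    rw [sub_le_iff_le_add]
    have hW1 : partialW p 1 μ ν ≤ 1 := by
      refine (partialW_le (plan_prod μ ν)).trans ?_
      refine Real.rpow_le_one (aux_nonneg p _) ?_ (by positivity)
      simpa using aux_le_mass hdiam p hp (μ.prod ν)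
    have hkp : 0 < k ^ (-((p + 1) / p)) := Real.rpow_pos_of_pos hk _
    by_cases h : ε ≤ 1 / k
    · have key : partialW p 1 μ ν - ε ^ (1 / p) ≤ partialW p (1 - ε) μ ν := by
        refine le_csInf ⟨_, _, plan_smul ⟨by linarith [hε.2], by linarith [hε.1]⟩
          (plan_prod μ ν), rfl⟩ ?_
        rintro c ⟨γ, hγ, rfl⟩
        linarith [partialW_completion hdiam μ ν p ε hp hε γ hγ]
      have h2 : ε ^ (1 / p) ≤ (1 / k) ^ (1 / p) :=
        Real.rpow_le_rpow hε.1 h (by positivity)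
      have h3 : k ^ (-((p + 1) / p)) = (1 / k) * (1 / k) ^ (1 / p) := by
        have : -((p + 1) / p) = -1 + -(1 / p) := by field_simp; ring
        rw [this, Real.rpow_add hk, Real.rpow_neg_one, Real.rpow_neg hk.le, one_div k,
          Real.inv_rpow hk.le]
      rw [h3]
      calc (1 / k) * partialW p 1 μ ν ≤ (1 / k) * (k * ε + (1 / k) ^ (1 / p)) := by
            gcongr; linarith
        _ = _ := by field_simp
    · have : (1 / k) * partialW p 1 μ ν ≤ 1 / k := mul_le_of_le_one_right (by positivity) hW1
      linarith
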